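/- A pair of random variables α, β on a finite probability space is conditionally independent (of some finite order) if and only if their joint probability matrix is not a block matrix. -/

import Mathlib

open scoped BigOperators Classical

noncomputable section

/-- Probability of an event `E` under a distribution `μ` on a finite sample space `Ω`. -/
def pr {Ω : Type} [Fintype Ω] (μ : Ω → ℝ) (E : Ω → Prop) : ℝ :=
  ∑ ω, if E ω then μ ω else 0

/-- `μ` is a probability distribution on the finite space `Ω`. -/
def IsProb {Ω : Type} [Fintype Ω] (μ : Ω → ℝ) : Prop :=
  (∀ ω, 0 ≤ μ ω) ∧ ∑ ω, μ ω = 1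

/-- Shannon entropy (base 2) of a random variable `α` on a finite probability space. -/
def ent {Ω A : Type} [Fintype Ω] (μ : Ω → ℝ) (α : Ω → A) : ℝ :=
  -∑ a ∈ Finset.univ.image α,
      pr μ (fun ω => α ω = a) * Real.logb 2 (pr μ (fun ω => α ω = a))

/-- Conditional entropy `H(α | β)`. -/
def condEnt {Ω A B : Type} [Fintype Ω] (μ : Ω → ℝ) (α : Ω → A) (β : Ω → B) : ℝ :=
  ent μ (fun ω => (α ω, β ω)) - ent μ β

/-- Mutual information `I(α : β)`. -/
def mutualInfo {Ω A B : Type} [Fintype Ω] (μ : Ω → ℝ) (α : Ω → A) (β : Ω → B) : ℝ :=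
  ent μ α + ent μ β - ent μ (fun ω => (α ω, β ω))

/-- Conditional mutual information `I(α : β | γ)`. -/
def condMutualInfo {Ω A B C : Type} [Fintype Ω] (μ : Ω → ℝ)
    (α : Ω → A) (β : Ω → B) (γ : Ω → C) : ℝ :=
  condEnt μ α γ + condEnt μ β γ - condEnt μ (fun ω => (α ω, β ω)) γ

/-- Independence of two random variables. -/
def Indep {Ω A B : Type} [Fintype Ω] (μ : Ω → ℝ) (α : Ω → A) (β : Ω → B) : Prop :=
  ∀ (a : A) (b : B),
    pr μ (fun ω => α ω = a ∧ β ω = b) =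
      pr μ (fun ω => α ω = a) * pr μ (fun ω => β ω = b)

/-- Auxiliary form of "conditionally independent of order `k`" (explicit `Fintype`):
`α` and `β` are conditionally independent of order `0` if they are independent,
and of order `k + 1` if on some finite probability space there are random variables
`α₀, β₀, α*, β*` such that `(α₀, β₀)` has the same joint distribution as `(α, β)`,
`I(α₀ : β₀ | α*) = 0`, `I(α₀ : β₀ | β*) = 0`, and `α*, β*` are conditionally
independent of order `k`. -/
def CondIndepOrderAux : ℕ → (Ω A B : Type) → Fintype Ω → (Ω → ℝ) → (Ω → A) → (Ω → B) → Prop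
  | 0, _Ω, _A, _B, iΩ, μ, α, β => @Indep _ _ _ iΩ μ α β
  | k+1, _Ω, A, B, iΩ, μ, α, β =>
      ∃ (Ω' A' B' : Type) (iΩ' : Fintype Ω') (μ' : Ω' → ℝ)
        (α₀ : Ω' → A) (β₀ : Ω' → B) (αs : Ω' → A') (βs : Ω' → B'),
        @IsProb _ iΩ' μ' ∧
        (∀ (a : A) (b : B),
          @pr _ iΩ' μ' (fun ω => α₀ ω = a ∧ β₀ ω = b) =
            @pr _ iΩ μ (fun ω => α ω = a ∧ β ω = b)) ∧
        @condMutualInfo _ _ _ _ iΩ' μ' α₀ β₀ αs = 0 ∧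
        @condMutualInfo _ _ _ _ iΩ' μ' α₀ β₀ βs = 0 ∧
        CondIndepOrderAux k Ω' A' B' iΩ' μ' αs βs

/-- Random variables `α` and `β` on a finite probability space are
conditionally independent of order `k`. -/
def CondIndepOrder {Ω A B : Type} [iΩ : Fintype Ω]
    (μ : Ω → ℝ) (α : Ω → A) (β : Ω → B) (k : ℕ) : Prop :=
  CondIndepOrderAux k Ω A B iΩ μ α β

/-- An `m × n` joint probability matrix: nonnegative entries summing to `1`. -/
def IsJointProbMatrix {m n : ℕ} (M : Matrix (Fin m) (Fin n) ℝ) : Prop :=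
  (∀ i j, 0 ≤ M i j) ∧ ∑ i, ∑ j, M i j = 1

/-- `M` is the joint probability matrix of the pair `(α, β)`. -/
def IsJointMatrixOf {Ω : Type} [Fintype Ω] {m n : ℕ} (M : Matrix (Fin m) (Fin n) ℝ)
    (μ : Ω → ℝ) (α : Ω → Fin m) (β : Ω → Fin n) : Prop :=
  ∀ i j, M i j = pr μ (fun ω => α ω = i ∧ β ω = j)

/-- `M` is a block matrix: rows and columns can be partitioned into two nonempty
parts so that the two diagonal blocks each contain a nonzero element and all
entries outside the diagonal blocks vanish. -/
def IsBlockMatrix {m n : ℕ} (M : Matrix (Fin m) (Fin n) ℝ) : Prop :=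
  ∃ (I₁ : Finset (Fin m)) (J₁ : Finset (Fin n)),
    I₁.Nonempty ∧ I₁ᶜ.Nonempty ∧ J₁.Nonempty ∧ J₁ᶜ.Nonempty ∧
    (∃ i ∈ I₁, ∃ j ∈ J₁, M i j ≠ 0) ∧
    (∃ i ∈ I₁ᶜ, ∃ j ∈ J₁ᶜ, M i j ≠ 0) ∧
    (∀ i j, ((i ∈ I₁ ∧ j ∈ J₁ᶜ) ∨ (i ∈ I₁ᶜ ∧ j ∈ J₁)) → M i j = 0)

/-- `M` is a good matrix: the joint probability matrix of some pair of
conditionally independent random variables (of some finite order). -/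
def IsGoodMatrix {m n : ℕ} (M : Matrix (Fin m) (Fin n) ℝ) : Prop :=
  ∃ (Ω : Type) (iΩ : Fintype Ω) (μ : Ω → ℝ) (α : Ω → Fin m) (β : Ω → Fin n) (k : ℕ),
    @IsProb _ iΩ μ ∧ @IsJointMatrixOf _ iΩ _ _ M μ α β ∧
    @CondIndepOrder _ _ _ iΩ μ α β k

/-- A stochastic matrix: nonnegative entries, all row sums equal to `1`. -/
def IsStochastic {m n : ℕ} (A : Matrix (Fin m) (Fin n) ℝ) : Prop :=
  (∀ i j, 0 ≤ A i j) ∧ ∀ i, ∑ j, A i j = 1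

/-- The matrix `D_ε`: diagonal entries `1/2 - ε`, off-diagonal entries `ε`. -/
def Dmat (ε : ℝ) : Matrix (Fin 2) (Fin 2) ℝ :=
  fun i j => if i = j then 1/2 - ε else ε

/-- The distribution of `n` i.i.d. trials, each distributed according to `μ`. -/
def iidMeasure {Ω : Type} [Fintype Ω] (μ : Ω → ℝ) (n : ℕ) : (Fin n → Ω) → ℝ :=
  fun ωv => ∏ i, μ (ωv i)

/-- The sequence of `n` coordinatewise copies of a random variable. -/
def iidRV {Ω A : Type} (α : Ω → A) (n : ℕ) : (Fin n → Ω) → (Fin n → A) :=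
  fun ωv i => α (ωv i)

/-- `(u, v, w)` belongs to the rate region of the pair `(α, β)`. -/
def InRateRegion {Ω A B : Type} [Fintype Ω] (μ : Ω → ℝ) (α : Ω → A) (β : Ω → B)
    (u v w : ℝ) : Prop :=
  0 ≤ u ∧ 0 ≤ v ∧ 0 ≤ w ∧
  ∀ ε > (0:ℝ), ∀ δ > (0:ℝ), ∃ n₀ : ℕ, ∀ n ≥ n₀,
    ∃ (t : (Fin n → A) × (Fin n → B) → (Fin ⌊(u + δ) * n⌋₊ → Bool))
      (f : (Fin n → A) × (Fin n → B) → (Fin ⌊(v + δ) * n⌋₊ → Bool))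
      (g : (Fin n → A) × (Fin n → B) → (Fin ⌊(w + δ) * n⌋₊ → Bool))
      (r : (Fin ⌊(u + δ) * n⌋₊ → Bool) × (Fin ⌊(v + δ) * n⌋₊ → Bool) → (Fin n → A))
      (s : (Fin ⌊(u + δ) * n⌋₊ → Bool) × (Fin ⌊(w + δ) * n⌋₊ → Bool) → (Fin n → B)),
      pr (iidMeasure μ n) (fun ωv =>
          r (t (iidRV α n ωv, iidRV β n ωv), f (iidRV α n ωv, iidRV β n ωv)) = iidRV α n ωv)
        > 1 - ε ∧
      pr (iidMeasure μ n) (fun ωv =>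
          s (t (iidRV α n ωv, iidRV β n ωv), g (iidRV α n ωv, iidRV β n ωv)) = iidRV β n ωv)
        > 1 - ε

/-- The support of a matrix: the set of positions of its nonzero entries. -/
def msupport {m n : ℕ} (M : Matrix (Fin m) (Fin n) ℝ) : Set (Fin m × Fin n) :=
  {p | M p.1 p.2 ≠ 0}

/-- An r-matrix: nonnegative entries and rectangular support. -/
def IsRMatrix {m n : ℕ} (M : Matrix (Fin m) (Fin n) ℝ) : Prop :=
  (∀ i j, 0 ≤ M i j) ∧ ∃ (A : Set (Fin m)) (B : Set (Fin n)), msupport M = A ×ˢ B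

/-- An r-decomposition of `M`: an expression of `M` as a finite sum of r-matrices
such that the supports of consecutive summands intersect. -/
def IsRDecomposition {m n : ℕ} (M : Matrix (Fin m) (Fin n) ℝ)
    (l : ℕ) (Ms : Fin l → Matrix (Fin m) (Fin n) ℝ) : Prop :=
  M = ∑ i, Ms i ∧ (∀ i, IsRMatrix (Ms i)) ∧
  ∀ (i : ℕ) (h : i + 1 < l),
    (msupport (Ms ⟨i, Nat.lt_of_succ_lt h⟩) ∩ msupport (Ms ⟨i + 1, h⟩)).Nonempty

end

/-
A block structure is a nonconstant bit that can be read off from `α` as well as from `β`. If `α` and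
`β` are independent given `γ`, then `γ` also determines that bit, so the bit is passed on to any
pair of screening variables and never reaches an independent pair.

Conversely, two noisy copies of a variable are screened by two noisy copies that are less correlated
by a fixed amount, so after finitely many steps they become independent. Every law whose support is
a rectangle is that of a noisy copy sent through a channel, hence is conditionally independent too.
Without a common bit the support is connected, so walking through it covers it by a chain of
rectangles in which consecutive ones intersect. Splitting the law along the chain into rank-one
pieces, the index of the piece screens `α` off from `β`, and so does a second index allowed to move
only to neighbouring rectangles; the law of the two indices is supported on a chain with one
rectangle fewer.
-/

section Probability

variable {Ω A : Type} [Fintype Ω] {μ : Ω → ℝ}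

theorem pr_nonneg (hμ : ∀ ω, 0 ≤ μ ω) (E : Ω → Prop) : 0 ≤ pr μ E :=
  Finset.sum_nonneg fun ω _ => by split_ifs <;> simp [hμ ω]

theorem pr_pos_iff (hμ : ∀ ω, 0 ≤ μ ω) {E : Ω → Prop} : 0 < pr μ E ↔ ∃ ω, E ω ∧ 0 < μ ω := by
  have summand_nonneg : ∀ ω ∈ Finset.univ, 0 ≤ if E ω then μ ω else 0 :=
    fun ω _ => by split_ifs <;> simp [hμ ω]
  simp only [pr, Finset.sum_pos_iff_of_nonneg summand_nonneg, Finset.mem_univ, true_and]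
  refine exists_congr fun ω => ?_
  by_cases hE : E ω <;> simp [hE]

theorem pr_mono (hμ : ∀ ω, 0 ≤ μ ω) {E F : Ω → Prop} (h : ∀ ω, E ω → F ω) : pr μ E ≤ pr μ F :=
  Finset.sum_le_sum fun ω _ => by
    by_cases hE : E ω
    · simp [hE, h ω hE]
    · split_ifs <;> simp [hμ ω]

theorem sum_pr_and_eq {X : Ω → A} {S : Finset A} (hS : ∀ ω, X ω ∈ S) (E : Ω → Prop) :
    ∑ x ∈ S, pr μ (fun ω => E ω ∧ X ω = x) = pr μ E := by
  simp only [pr]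
  rw [Finset.sum_comm]
  refine Finset.sum_congr rfl fun ω _ => ?_
  by_cases hE : E ω <;> simp [hE, hS ω]

theorem sum_pr_mul_eq {X : Ω → A} {S : Finset A} (hS : ∀ ω, X ω ∈ S) (g : A → ℝ) :
    ∑ x ∈ S, pr μ (fun ω => X ω = x) * g x = ∑ ω, μ ω * g (X ω) := by
  simp only [pr, Finset.sum_mul]
  rw [Finset.sum_comm]
  simp [ite_mul, hS]

theorem ent_eq_neg_sum (μ : Ω → ℝ) (X : Ω → A) :
    ent μ X = -∑ ω, μ ω * Real.logb 2 (pr μ fun ω' => X ω' = X ω) := by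
  rw [ent, sum_pr_mul_eq (by simp) fun x => Real.logb 2 (pr μ fun ω => X ω = x)]

end Probability

section Gibbs

variable {ι : Type*} {s : Finset ι} {p q : ι → ℝ}

open InformationTheory in
theorem sum_mul_log_div_eq_zero_iff (hp : ∀ i ∈ s, 0 ≤ p i) (hq : ∀ i ∈ s, 0 ≤ q i)
    (hpq : ∀ i ∈ s, q i = 0 → p i = 0) (hsum : ∑ i ∈ s, p i = ∑ i ∈ s, q i) :
    ∑ i ∈ s, p i * Real.log (p i / q i) = 0 ↔ ∀ i ∈ s, p i = q i := by
  have klFun_term : ∀ i ∈ s,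
      p i * Real.log (p i / q i) = q i * klFun (p i / q i) + (p i - q i) := by
    intro i hi
    by_cases hqi : q i = 0
    · simp [hqi, hpq i hi hqi]
    · rw [klFun_apply]
      field_simp
      ring
  have klFun_nonneg : ∀ i ∈ s, 0 ≤ q i * klFun (p i / q i) := fun i hi =>
    mul_nonneg (hq i hi) (klFun_nonneg (div_nonneg (hp i hi) (hq i hi)))
  rw [Finset.sum_congr rfl klFun_term, Finset.sum_add_distrib, Finset.sum_sub_distrib, hsum,
    sub_self, add_zero, Finset.sum_eq_zero_iff_of_nonneg klFun_nonneg]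
  refine forall₂_congr fun i hi => ?_
  by_cases hqi : q i = 0
  · simp [hqi, hpq i hi hqi]
  · rw [mul_eq_zero_iff_left hqi, klFun_eq_zero_iff (div_nonneg (hp i hi) (hq i hi)),
      div_eq_one_iff_eq hqi]

end Gibbs

section ConditionalIndependence

variable {Ω A B C : Type} [Fintype Ω] {μ : Ω → ℝ}

/-- The law of a triple `(γ, α, β)` with the given marginals `(γ, α)` and `(γ, β)` in which `α` and
`β` are conditionally independent given `γ`. Where `γ` takes a value of probability zero, the
convention `x / 0 = 0` gives the intended value `0`. -/
noncomputable def condProductLaw (μ : Ω → ℝ) (α : Ω → A) (β : Ω → B) (γ : Ω → C) :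
    C × A × B → ℝ :=
  fun (c, a, b) =>
    pr μ (fun ω => γ ω = c ∧ α ω = a) * pr μ (fun ω => γ ω = c ∧ β ω = b) / pr μ (fun ω => γ ω = c)

variable {α : Ω → A} {β : Ω → B} {γ : Ω → C}

theorem condProductLaw_nonneg (hμ : ∀ ω, 0 ≤ μ ω) (x : C × A × B) :
    0 ≤ condProductLaw μ α β γ x :=
  div_nonneg (mul_nonneg (pr_nonneg hμ _) (pr_nonneg hμ _)) (pr_nonneg hμ _)

theorem condProductLaw_pos_of_pr_pos (hμ : ∀ ω, 0 ≤ μ ω) {x : C × A × B}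
    (hx : 0 < pr μ fun ω => (γ ω, α ω, β ω) = x) : 0 < condProductLaw μ α β γ x :=
  have pos {E : Ω → Prop} (hE : ∀ ω, (γ ω, α ω, β ω) = x → E ω) : 0 < pr μ E :=
    hx.trans_le (pr_mono hμ hE)
  div_pos (mul_pos (pos (by grind)) (pos (by grind))) (pos (by grind))

theorem mem_product_image_of_condProductLaw_ne_zero (hμ : ∀ ω, 0 ≤ μ ω) {x : C × A × B}
    (hx : condProductLaw μ α β γ x ≠ 0) :
    x ∈ Finset.univ.image γ ×ˢ Finset.univ.image α ×ˢ Finset.univ.image β := by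
  have exists_of_ne_zero {E : Ω → Prop} (hE : pr μ E ≠ 0) : ∃ ω, E ω :=
    ((pr_pos_iff hμ).1 (lt_of_le_of_ne' (pr_nonneg hμ E) hE)).imp fun _ => And.left
  have factors_ne_zero := mul_ne_zero_iff.1 (div_ne_zero_iff.1 hx).1
  obtain ⟨ω, hγ, hα⟩ := exists_of_ne_zero factors_ne_zero.1
  obtain ⟨ω', -, hβ⟩ := exists_of_ne_zero factors_ne_zero.2
  simp only [Finset.mem_product, Finset.mem_image, Finset.mem_univ, true_and]
  exact ⟨⟨ω, hγ⟩, ⟨ω, hα⟩, ⟨ω', hβ⟩⟩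

theorem sum_condProductLaw {SA : Finset A} {SB : Finset B} {SC : Finset C} (hα : ∀ ω, α ω ∈ SA)
    (hβ : ∀ ω, β ω ∈ SB) (hγ : ∀ ω, γ ω ∈ SC) :
    ∑ x ∈ SC ×ˢ SA ×ˢ SB, condProductLaw μ α β γ x = ∑ ω, μ ω := by
  calc
    _ = ∑ c ∈ SC, (∑ a ∈ SA, pr μ fun ω => γ ω = c ∧ α ω = a) *
          (∑ b ∈ SB, pr μ fun ω => γ ω = c ∧ β ω = b) / pr μ fun ω => γ ω = c := by
      simp only [condProductLaw, Finset.sum_product, Finset.sum_mul_sum, Finset.sum_div]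
    _ = ∑ c ∈ SC, pr μ fun ω => γ ω = c := by
      simp only [sum_pr_and_eq hα, sum_pr_and_eq hβ, mul_self_div_self]
    _ = ∑ ω, μ ω := by simpa using sum_pr_mul_eq hγ fun _ => (1 : ℝ)

theorem condMutualInfo_eq_sum_mul_logb (hμ : ∀ ω, 0 ≤ μ ω) :
    condMutualInfo μ α β γ =
      ∑ ω, μ ω * Real.logb 2 ((pr μ fun ω' => (γ ω', α ω', β ω') = (γ ω, α ω, β ω)) /
        condProductLaw μ α β γ (γ ω, α ω, β ω)) := by
  have split_log : ∀ ω, μ ω * Real.logb 2 ((pr μ fun ω' => (γ ω', α ω', β ω') = (γ ω, α ω, β ω)) /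
        condProductLaw μ α β γ (γ ω, α ω, β ω)) =
      μ ω * Real.logb 2 (pr μ fun ω' => ((α ω', β ω'), γ ω') = ((α ω, β ω), γ ω))
        + μ ω * Real.logb 2 (pr μ fun ω' => γ ω' = γ ω)
        - μ ω * Real.logb 2 (pr μ fun ω' => (α ω', γ ω') = (α ω, γ ω))
        - μ ω * Real.logb 2 (pr μ fun ω' => (β ω', γ ω') = (β ω, γ ω)) := by
    intro ω
    rcases (hμ ω).eq_or_lt with hω | hω
    · simp [← hω]
    have ne_zero {E : Ω → Prop} (hE : E ω) : pr μ E ≠ 0 := ((pr_pos_iff hμ).2 ⟨ω, hE, hω⟩).ne'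
    have prod_ne_zero : condProductLaw μ α β γ (γ ω, α ω, β ω) ≠ 0 :=
      (condProductLaw_pos_of_pr_pos hμ ((pr_pos_iff hμ).2 ⟨ω, rfl, hω⟩)).ne'
    rw [Real.logb_div (ne_zero (by simp)) prod_ne_zero, condProductLaw,
      Real.logb_div (mul_ne_zero (ne_zero (by simp)) (ne_zero (by simp))) (ne_zero (by simp)),
      Real.logb_mul (ne_zero (by simp)) (ne_zero (by simp))]
    simp only [Prod.mk.injEq, and_comm]
    ring
  simp only [split_log, Finset.sum_add_distrib, Finset.sum_sub_distrib, condMutualInfo, condEnt,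
    ent_eq_neg_sum]
  ring

theorem condMutualInfo_eq_zero_iff_pr_eq (hμ : ∀ ω, 0 ≤ μ ω) :
    condMutualInfo μ α β γ = 0 ↔
      ∀ x, (pr μ fun ω => (γ ω, α ω, β ω) = x) = condProductLaw μ α β γ x := by
  set T : Ω → C × A × B := fun ω => (γ ω, α ω, β ω)
  set S := Finset.univ.image γ ×ˢ Finset.univ.image α ×ˢ Finset.univ.image β
  have mem_S : ∀ ω, T ω ∈ S := fun ω => by simp [S, T]
  have pr_eq_zero : ∀ x, condProductLaw μ α β γ x = 0 → (pr μ fun ω => T ω = x) = 0 :=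
    fun x hx => by_contra fun h => (condProductLaw_pos_of_pr_pos hμ
      (lt_of_le_of_ne' (pr_nonneg hμ _) h)).ne' hx
  have sum_eq : ∑ x ∈ S, pr μ (fun ω => T ω = x) = ∑ x ∈ S, condProductLaw μ α β γ x := by
    rw [sum_condProductLaw (by simp) (by simp) (by simp)]
    simpa using sum_pr_mul_eq mem_S fun _ => (1 : ℝ)
  have kl_eq : condMutualInfo μ α β γ = (∑ x ∈ S, pr μ (fun ω => T ω = x) *
      Real.log (pr μ (fun ω => T ω = x) / condProductLaw μ α β γ x)) / Real.log 2 := by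
    rw [condMutualInfo_eq_sum_mul_logb hμ, sum_pr_mul_eq mem_S fun x =>
      Real.log (pr μ (fun ω => T ω = x) / condProductLaw μ α β γ x), Finset.sum_div]
    simp only [Real.logb, mul_div_assoc, T]
  rw [kl_eq, div_eq_zero_iff, or_iff_left (Real.log_pos one_lt_two).ne',
    sum_mul_log_div_eq_zero_iff (fun _ _ => pr_nonneg hμ _) (fun x _ => condProductLaw_nonneg hμ x)
      (fun x _ => pr_eq_zero x) sum_eq]
  refine ⟨fun h x => ?_, fun h x _ => h x⟩
  by_cases hx : x ∈ S
  · exact h x hx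
  · have prod_eq_zero : condProductLaw μ α β γ x = 0 :=
      by_contra fun h => hx (mem_product_image_of_condProductLaw_ne_zero hμ h)
    rw [prod_eq_zero, pr_eq_zero x prod_eq_zero]

theorem condMutualInfo_eq_zero_iff (hμ : ∀ ω, 0 ≤ μ ω) :
    condMutualInfo μ α β γ = 0 ↔ ∀ a b c,
      pr μ (fun ω => γ ω = c ∧ α ω = a ∧ β ω = b) * pr μ (fun ω => γ ω = c) =
        pr μ (fun ω => γ ω = c ∧ α ω = a) * pr μ (fun ω => γ ω = c ∧ β ω = b) := by
  have eq_condProductLaw_iff (a : A) (b : B) (c : C) :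
      (pr μ fun ω => (γ ω, α ω, β ω) = (c, a, b)) = condProductLaw μ α β γ (c, a, b) ↔
      pr μ (fun ω => γ ω = c ∧ α ω = a ∧ β ω = b) * pr μ (fun ω => γ ω = c) =
        pr μ (fun ω => γ ω = c ∧ α ω = a) * pr μ (fun ω => γ ω = c ∧ β ω = b) := by
    simp only [Prod.mk.injEq, condProductLaw]
    by_cases hc : (pr μ fun ω => γ ω = c) = 0
    · have eq_zero {E : Ω → Prop} (hE : ∀ ω, E ω → γ ω = c) : pr μ E = 0 :=
        le_antisymm (hc ▸ pr_mono hμ hE) (pr_nonneg hμ E)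
      simp [hc, eq_zero fun _ h => And.left h]
    · rw [eq_div_iff hc]
  rw [condMutualInfo_eq_zero_iff_pr_eq hμ]
  exact ⟨fun h a b c => (eq_condProductLaw_iff a b c).1 (h _),
    fun h x => (eq_condProductLaw_iff _ _ _).2 (h _ _ _)⟩

theorem condMutualInfo_eq_zero_of_factorization (hμ : ∀ ω, 0 ≤ μ ω)
    (x : C → A → ℝ) (z : C → B → ℝ)
    (h : ∀ a b c, pr μ (fun ω => γ ω = c ∧ α ω = a ∧ β ω = b) = x c a * z c b) :
    condMutualInfo μ α β γ = 0 := by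
  have mem_image {D : Type} (X : Ω → D) (ω : Ω) : X ω ∈ Finset.univ.image X := by simp
  have pr_gamma_alpha (c : C) (a : A) :
      pr μ (fun ω => γ ω = c ∧ α ω = a) = x c a * ∑ b ∈ Finset.univ.image β, z c b := by
    rw [← sum_pr_and_eq (mem_image β), Finset.mul_sum]
    simp only [and_assoc, h]
  have pr_gamma_beta (c : C) (b : B) :
      pr μ (fun ω => γ ω = c ∧ β ω = b) = (∑ a ∈ Finset.univ.image α, x c a) * z c b := by
    rw [← sum_pr_and_eq (mem_image α), Finset.sum_mul]
    simp only [and_assoc, and_comm (a := β _ = b), h]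
  have pr_gamma (c : C) : pr μ (fun ω => γ ω = c) =
      (∑ a ∈ Finset.univ.image α, x c a) * ∑ b ∈ Finset.univ.image β, z c b := by
    rw [← sum_pr_and_eq (mem_image α), Finset.sum_mul]
    simp only [pr_gamma_alpha]
  refine (condMutualInfo_eq_zero_iff hμ).2 fun a b c => ?_
  rw [h, pr_gamma, pr_gamma_alpha, pr_gamma_beta]
  ring

end ConditionalIndependence

section CommonBit

variable {Ω Ω' A B C : Type} [Fintype Ω] [Fintype Ω'] {μ : Ω → ℝ} {μ' : Ω' → ℝ}
  {α : Ω → A} {β : Ω → B}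

/-- Some nonconstant bit can be read off from `α` alone as well as from `β` alone, almost surely:
`α ∈ P` if and only if `β ∈ Q`. -/
def HasCommonBit (μ : Ω → ℝ) (α : Ω → A) (β : Ω → B) : Prop :=
  ∃ (P : Set A) (Q : Set B), (∀ ω, 0 < μ ω → (α ω ∈ P ↔ β ω ∈ Q)) ∧
    (∃ ω, 0 < μ ω ∧ α ω ∈ P) ∧ ∃ ω, 0 < μ ω ∧ α ω ∉ P

theorem HasCommonBit.congr (hμ : ∀ ω, 0 ≤ μ ω) (hμ' : ∀ ω, 0 ≤ μ' ω) {α' : Ω' → A} {β' : Ω' → B}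
    (hlaw : ∀ a b, pr μ' (fun ω => α' ω = a ∧ β' ω = b) = pr μ (fun ω => α ω = a ∧ β ω = b))
    (h : HasCommonBit μ α β) : HasCommonBit μ' α' β' := by
  have exists_iff (a : A) (b : B) :
      (∃ ω, (α' ω = a ∧ β' ω = b) ∧ 0 < μ' ω) ↔ ∃ ω, (α ω = a ∧ β ω = b) ∧ 0 < μ ω := by
    rw [← pr_pos_iff hμ, ← pr_pos_iff hμ', hlaw]
  have exists_in_Ω' (ω : Ω) (hω : 0 < μ ω) : ∃ ω', (α' ω' = α ω ∧ β' ω' = β ω) ∧ 0 < μ' ω' :=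
    (exists_iff _ _).2 ⟨ω, ⟨rfl, rfl⟩, hω⟩
  have exists_in_Ω (ω' : Ω') (hω' : 0 < μ' ω') : ∃ ω, (α ω = α' ω' ∧ β ω = β' ω') ∧ 0 < μ ω :=
    (exists_iff _ _).1 ⟨ω', ⟨rfl, rfl⟩, hω'⟩
  obtain ⟨P, Q, hPQ, ⟨ω₁, hω₁, hP₁⟩, ω₂, hω₂, hP₂⟩ := h
  refine ⟨P, Q, fun ω' hω' => ?_, ?_, ?_⟩
  · obtain ⟨ω, ⟨hα, hβ⟩, hω⟩ := exists_in_Ω ω' hω'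
    simpa only [hα, hβ] using hPQ ω hω
  · obtain ⟨ω', ⟨hα, -⟩, hω'⟩ := exists_in_Ω' ω₁ hω₁
    exact ⟨ω', hω', hα ▸ hP₁⟩
  · obtain ⟨ω', ⟨hα, -⟩, hω'⟩ := exists_in_Ω' ω₂ hω₂
    exact ⟨ω', hω', hα ▸ hP₂⟩

theorem HasCommonBit.not_indep (hμ : ∀ ω, 0 ≤ μ ω) (h : HasCommonBit μ α β) : ¬ Indep μ α β := by
  intro hindep
  obtain ⟨P, Q, hPQ, ⟨ω₁, hω₁, hP₁⟩, ω₂, hω₂, hP₂⟩ := h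
  have joint_pos : 0 < pr μ fun ω => α ω = α ω₁ ∧ β ω = β ω₂ := by
    rw [hindep]
    exact mul_pos ((pr_pos_iff hμ).2 ⟨ω₁, rfl, hω₁⟩) ((pr_pos_iff hμ).2 ⟨ω₂, rfl, hω₂⟩)
  obtain ⟨ω, ⟨hα, hβ⟩, hω⟩ := (pr_pos_iff hμ).1 joint_pos
  have hbit := hPQ ω hω
  rw [hα, hβ, ← hPQ ω₂ hω₂] at hbit
  exact hP₂ (hbit.1 hP₁)

theorem exists_pos_of_condMutualInfo_eq_zero (hμ : ∀ ω, 0 ≤ μ ω) {γ : Ω → C}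
    (h : condMutualInfo μ α β γ = 0) {ω₁ ω₂ : Ω} (hω₁ : 0 < μ ω₁) (hω₂ : 0 < μ ω₂)
    (hγ : γ ω₁ = γ ω₂) : ∃ ω, 0 < μ ω ∧ α ω = α ω₁ ∧ β ω = β ω₂ := by
  have marginals_pos : 0 < pr μ (fun ω => γ ω = γ ω₁ ∧ α ω = α ω₁) *
      pr μ (fun ω => γ ω = γ ω₁ ∧ β ω = β ω₂) :=
    mul_pos ((pr_pos_iff hμ).2 ⟨ω₁, ⟨rfl, rfl⟩, hω₁⟩)
      ((pr_pos_iff hμ).2 ⟨ω₂, ⟨hγ.symm, rfl⟩, hω₂⟩)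
  rw [← (condMutualInfo_eq_zero_iff hμ).1 h] at marginals_pos
  obtain ⟨ω, ⟨-, hα, hβ⟩, hω⟩ :=
    (pr_pos_iff hμ).1 (pos_of_mul_pos_left marginals_pos (pr_nonneg hμ _))
  exact ⟨ω, hω, hα, hβ⟩

theorem exists_mem_iff_of_condMutualInfo_eq_zero (hμ : ∀ ω, 0 ≤ μ ω) {γ : Ω → C}
    (h : condMutualInfo μ α β γ = 0) {P : Set A} {Q : Set B}
    (hPQ : ∀ ω, 0 < μ ω → (α ω ∈ P ↔ β ω ∈ Q)) :
    ∃ R : Set C, ∀ ω, 0 < μ ω → (γ ω ∈ R ↔ α ω ∈ P) := by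
  refine ⟨{c | ∃ ω, 0 < μ ω ∧ γ ω = c ∧ α ω ∈ P}, fun ω hω => ⟨?_, fun hP => ⟨ω, hω, rfl, hP⟩⟩⟩
  rintro ⟨ω₁, hω₁, hγ, hP⟩
  obtain ⟨ω₂, hω₂, hα, hβ⟩ := exists_pos_of_condMutualInfo_eq_zero hμ h hω₁ hω hγ
  rw [hPQ ω hω, ← hβ, ← hPQ ω₂ hω₂, hα]
  exact hP

theorem HasCommonBit.of_condMutualInfo_eq_zero {A' B' : Type} (hμ : ∀ ω, 0 ≤ μ ω)
    (h : HasCommonBit μ α β) {αs : Ω → A'} {βs : Ω → B'}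
    (hαs : condMutualInfo μ α β αs = 0) (hβs : condMutualInfo μ α β βs = 0) :
    HasCommonBit μ αs βs := by
  obtain ⟨P, Q, hPQ, ⟨ω₁, hω₁, hP₁⟩, ω₂, hω₂, hP₂⟩ := h
  obtain ⟨R, hR⟩ := exists_mem_iff_of_condMutualInfo_eq_zero hμ hαs hPQ
  obtain ⟨S, hS⟩ := exists_mem_iff_of_condMutualInfo_eq_zero hμ hβs hPQ
  exact ⟨R, S, fun ω hω => (hR ω hω).trans (hS ω hω).symm,
    ⟨ω₁, hω₁, (hR ω₁ hω₁).2 hP₁⟩, ω₂, hω₂, fun h => hP₂ ((hR ω₂ hω₂).1 h)⟩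

end CommonBit

theorem HasCommonBit.not_condIndepOrder {Ω A B : Type} [Fintype Ω] {μ : Ω → ℝ} {α : Ω → A}
    {β : Ω → B} (hμ : ∀ ω, 0 ≤ μ ω) (h : HasCommonBit μ α β) (k : ℕ) :
    ¬ CondIndepOrder μ α β k := by
  induction k generalizing Ω A B with
  | zero => exact h.not_indep hμ
  | succ k ih =>
    rintro ⟨Ω', A', B', _, μ', α₀, β₀, αs, βs, hμ', hlaw, hαs, hβs, hk⟩
    exact ih hμ'.1 ((h.congr hμ hμ'.1 hlaw).of_condMutualInfo_eq_zero hμ'.1 hαs hβs) hk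

section Screening

variable {A B T : Type}

theorem CondIndepOrder.congr {Ω Ω' : Type} [Fintype Ω] [Fintype Ω']
    {μ : Ω → ℝ} {μ' : Ω' → ℝ} {α : Ω → A} {β : Ω → B} {α' : Ω' → A} {β' : Ω' → B} {k : ℕ}
    (hlaw : ∀ a b, pr μ (fun ω => α ω = a ∧ β ω = b) = pr μ' (fun ω => α' ω = a ∧ β' ω = b))
    (h : CondIndepOrder μ α β k) : CondIndepOrder μ' α' β' k := by
  cases k with
  | zero =>
    have law_fst (a : A) : pr μ (fun ω => α ω = a) = pr μ' (fun ω => α' ω = a) := by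
      have mem_left (ω : Ω) : β ω ∈ Finset.univ.image β ∪ Finset.univ.image β' := by simp
      have mem_right (ω : Ω') : β' ω ∈ Finset.univ.image β ∪ Finset.univ.image β' := by simp
      rw [← sum_pr_and_eq mem_left, ← sum_pr_and_eq mem_right]
      simp only [hlaw]
    have law_snd (b : B) : pr μ (fun ω => β ω = b) = pr μ' (fun ω => β' ω = b) := by
      have mem_left (ω : Ω) : α ω ∈ Finset.univ.image α ∪ Finset.univ.image α' := by simp
      have mem_right (ω : Ω') : α' ω ∈ Finset.univ.image α ∪ Finset.univ.image α' := by simp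
      rw [← sum_pr_and_eq mem_left, ← sum_pr_and_eq mem_right]
      simp only [and_comm (a := _ = b), hlaw]
    intro a b
    rw [← hlaw, ← law_fst, ← law_snd]
    exact h a b
  | succ k =>
    obtain ⟨Ω'', A', B', _, μ'', α₀, β₀, αs, βs, hμ'', hlaw'', hrest⟩ := h
    exact ⟨Ω'', A', B', _, μ'', α₀, β₀, αs, βs, hμ'',
      fun a b => (hlaw'' a b).trans (hlaw a b), hrest⟩

variable [Fintype A] [Fintype B] [Fintype T]

/-- `M` is the joint law of a pair of random variables with values in `A` and `B`. -/
structure IsJointLaw (M : Matrix A B ℝ) : Prop where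
  nonneg : ∀ a b, 0 ≤ M a b
  sum_eq_one : ∑ a, ∑ b, M a b = 1

/-- Pairs with joint law `M` are conditionally independent of some order. By
`CondIndepOrder.congr` it is enough to ask this of the two coordinates on `A × B`. -/
def IsGoodLaw (M : Matrix A B ℝ) : Prop :=
  ∃ k, CondIndepOrder (fun p : A × B => M p.1 p.2) Prod.fst Prod.snd k

/-- `F` is the joint law of a quadruple `(α, β, αs, βs)` such that `(α, β)` has law `M`,
`(αs, βs)` has law `C`, and `αs` screens `α` off from `β`, that is, `α` and `β` are conditionally
independent given `αs`. Since `F` is symmetric in `αs` and `βs`, so does `βs`. -/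
structure IsScreeningLaw (F : A → B → T → T → ℝ) (M : Matrix A B ℝ) (C : Matrix T T ℝ) :
    Prop where
  nonneg : ∀ a b s t, 0 ≤ F a b s t
  symm : ∀ a b s t, F a b s t = F a b t s
  exists_factorization : ∀ s, ∃ (x : A → ℝ) (z : B → ℝ), ∀ a b, ∑ t, F a b s t = x a * z b
  sum_screens : ∀ a b, ∑ s, ∑ t, F a b s t = M a b
  sum_screened : ∀ s t, ∑ a, ∑ b, F a b s t = C s t

theorem pr_fst_snd (M : Matrix A B ℝ) (a : A) (b : B) :
    pr (fun p : A × B => M p.1 p.2) (fun p => p.1 = a ∧ p.2 = b) = M a b := by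
  simp [pr, Fintype.sum_prod_type, ite_and, Finset.sum_ite_irrel]

theorem isGoodLaw_vecMulVec {x : A → ℝ} {z : B → ℝ} (hx : ∑ a, x a = 1) (hz : ∑ b, z b = 1) :
    IsGoodLaw (Matrix.vecMulVec x z) := by
  refine ⟨0, fun a b => ?_⟩
  rw [pr_fst_snd]
  simp [pr, Fintype.sum_prod_type, Matrix.vecMulVec_apply, Finset.sum_ite_irrel,
    ← Finset.mul_sum, ← Finset.sum_mul, hx, hz]

variable {F : A → B → T → T → ℝ} {M : Matrix A B ℝ} {C : Matrix T T ℝ}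

theorem IsScreeningLaw.isGoodLaw (hF : IsScreeningLaw F M C) (hM : ∑ a, ∑ b, M a b = 1)
    (hC : IsGoodLaw C) : IsGoodLaw M := by
  obtain ⟨k, hk⟩ := hC
  set μ : (A × B) × T × T → ℝ := fun p => F p.1.1 p.1.2 p.2.1 p.2.2
  have hμ : ∀ p, 0 ≤ μ p := fun p => hF.nonneg _ _ _ _
  choose x z hxz using hF.exists_factorization
  have pr_screened (a : A) (b : B) : pr μ (fun p => p.1.1 = a ∧ p.1.2 = b) = M a b := by
    simp [μ, pr, Fintype.sum_prod_type, ite_and, Finset.sum_ite_irrel, hF.sum_screens]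
  have pr_screens (s t : T) : pr μ (fun p => p.2.1 = s ∧ p.2.2 = t) = C s t := by
    simp [μ, pr, Fintype.sum_prod_type, ite_and, Finset.sum_ite_irrel, hF.sum_screened]
  refine ⟨k + 1, (A × B) × T × T, T, T, inferInstance, μ, fun p => p.1.1, fun p => p.1.2,
    fun p => p.2.1, fun p => p.2.2, ⟨hμ, ?_⟩, ?_, ?_, ?_, hk.congr ?_⟩
  · simp [μ, Fintype.sum_prod_type, hF.sum_screens, hM]
  · simp only [pr_screened, pr_fst_snd, implies_true]
  · refine condMutualInfo_eq_zero_of_factorization hμ x z fun a b s => ?_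
    simp [μ, pr, Fintype.sum_prod_type, ite_and, Finset.sum_ite_irrel, hxz]
  · refine condMutualInfo_eq_zero_of_factorization hμ x z fun a b t => ?_
    simp [μ, pr, Fintype.sum_prod_type, ite_and, Finset.sum_ite_irrel, hF.symm, hxz]
  · simp only [pr_screens, pr_fst_snd, implies_true]

/-- `W` is a stochastic matrix: each row is a probability distribution. -/
structure IsChannel (W : Matrix A B ℝ) : Prop where
  nonneg : ∀ a b, 0 ≤ W a b
  sum_row : ∀ a, ∑ b, W a b = 1

theorem IsScreeningLaw.mul {D : Type} [Fintype D] (hF : IsScreeningLaw F M C) {W : Matrix B D ℝ}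
    (hW : IsChannel W) :
    IsScreeningLaw (fun a d s t => ∑ b, F a b s t * W b d) (M * W) C where
  nonneg a d s t := Finset.sum_nonneg fun b _ => mul_nonneg (hF.nonneg _ _ _ _) (hW.nonneg _ _)
  symm a d s t := by simp only [hF.symm a _ s t]
  exists_factorization s := by
    obtain ⟨x, z, hxz⟩ := hF.exists_factorization s
    refine ⟨x, fun d => ∑ b, z b * W b d, fun a d => ?_⟩
    rw [Finset.sum_comm]
    simp only [← Finset.sum_mul, hxz, Finset.mul_sum, mul_assoc]
  sum_screens a d := by
    simp only [Finset.sum_comm (s := (Finset.univ : Finset T)) (t := (Finset.univ : Finset B)),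
      ← Finset.sum_mul, hF.sum_screens, Matrix.mul_apply]
  sum_screened s t := by
    rw [← hF.sum_screened]
    refine Finset.sum_congr rfl fun a _ => ?_
    rw [Finset.sum_comm]
    simp only [← Finset.mul_sum, hW.sum_row, mul_one]

end Screening

section NoisyCopy

variable {A : Type}

local notation "δ" => (1 : Matrix _ _ ℝ)

/-- The joint law of two variables of law `w` that coincide with probability `lam` and are
independent otherwise. -/
noncomputable def noisyCopy (w : A → ℝ) (lam : ℝ) : Matrix A A ℝ :=
  lam • Matrix.diagonal w + (1 - lam) • Matrix.vecMulVec w w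

theorem noisyCopy_apply (w : A → ℝ) (lam : ℝ) (x y : A) :
    noisyCopy w lam x y = lam * (w x * δ x y) + (1 - lam) * (w x * w y) := by
  simp [noisyCopy, Matrix.diagonal_apply, Matrix.one_apply, Matrix.vecMulVec_apply]

theorem noisyCopy_nonneg {w : A → ℝ} (hw : ∀ a, 0 ≤ w a) {lam : ℝ} (hlam₀ : 0 ≤ lam)
    (hlam₁ : lam ≤ 1) (x y : A) : 0 ≤ noisyCopy w lam x y := by
  have hwx := hw x
  have hwy := hw y
  have : 0 ≤ 1 - lam := sub_nonneg.2 hlam₁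
  rw [noisyCopy_apply, Matrix.one_apply]
  positivity

theorem noisyCopy_pos_iff {w : A → ℝ} (hw : ∀ a, 0 ≤ w a) {lam : ℝ} (hlam₀ : 0 ≤ lam)
    (hlam₁ : lam < 1) {x y : A} : 0 < noisyCopy w lam x y ↔ 0 < w x ∧ 0 < w y := by
  have : 0 < 1 - lam := sub_pos.2 hlam₁
  rw [noisyCopy_apply, Matrix.one_apply]
  rcases (hw x).eq_or_lt with hx | hx
  · simp [← hx]
  rcases (hw y).eq_or_lt with hy | hy
  · have hxy : x ≠ y := fun h => (h ▸ hx).ne hy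
    simp [← hy, hxy]
  · simp only [hx, hy, and_self, iff_true]
    positivity

/-- A law of quadruples screening `noisyCopy w (ρ ^ 2)` by `noisyCopy w (ρ ^ 2 - κ)`. For `κ = 0`,
the quadruple `(x, y, s, t)` is either constant, or satisfies `(s, t) = (x, y)` or
`(s, t) = (y, x)` with `x` and `y` independent, or has independent entries. The correction weighted
by `κ` has vanishing sums over `s` and over `t`, so it decorrelates `s` from `t` and leaves the laws
of `(x, y, s)` and `(x, y, t)` alone. -/
noncomputable def noisyCopyScreen (w : A → ℝ) (ρ κ : ℝ) (x y s t : A) : ℝ :=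
  ρ ^ 2 * w x * δ x y * δ s x * δ t x
    + ρ * (1 - ρ) * w x * w y * (δ s x * δ t y + δ s y * δ t x)
    + (1 - ρ) ^ 2 * w x * w y * w s * w t
    - κ * w x * δ x y * (δ s x - w s) * (δ t x - w t)

theorem noisyCopyScreen_symm (w : A → ℝ) (ρ κ : ℝ) (x y s t : A) :
    noisyCopyScreen w ρ κ x y s t = noisyCopyScreen w ρ κ x y t s := by
  simp only [noisyCopyScreen]
  ring

theorem noisyCopyScreen_swap (w : A → ℝ) (ρ κ : ℝ) (x y s t : A) :
    noisyCopyScreen w ρ κ x y s t = noisyCopyScreen w ρ 0 s t x y -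
      κ * (w x * (δ x s - w s) * (δ x t - w t)
        * δ x y) := by
  simp only [noisyCopyScreen, Matrix.one_apply]
  grind

theorem noisyCopyScreen_nonneg {w : A → ℝ} (hw : ∀ a, 0 ≤ w a) {ρ κ : ℝ} (hρ₀ : 0 ≤ ρ) (hρ₁ : ρ ≤ 1)
    (hκ₀ : 0 ≤ κ) (hκ₁ : κ ≤ ρ ^ 2) (hκw : ∀ a, κ * w a ≤ (1 - ρ) ^ 2 * w a ^ 2) (x y s t : A) :
    0 ≤ noisyCopyScreen w ρ κ x y s t := by
  have one_nonneg (a b : A) : 0 ≤ δ a b := by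
    rw [Matrix.one_apply]; positivity
  have hwx := hw x
  have hwy := hw y
  have hws := hw s
  have hwt := hw t
  have hsx := one_nonneg s x
  have htx := one_nonneg t x
  have hsy := one_nonneg s y
  have hty := one_nonneg t y
  have : 0 ≤ 1 - ρ := sub_nonneg.2 hρ₁
  obtain rfl | hxy := eq_or_ne x y
  · have : 0 ≤ ρ ^ 2 - κ := sub_nonneg.2 hκ₁
    have hκx := sub_nonneg.2 (hκw x)
    have regroup : noisyCopyScreen w ρ κ x x s t =
        (ρ ^ 2 - κ) * w x * δ s x * δ t x
          + ρ * (1 - ρ) * w x * w x * (2 * δ s x * δ t x)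
          + ((1 - ρ) ^ 2 * w x ^ 2 - κ * w x) * (w s * w t)
          + κ * w x * (δ s x * w t + w s * δ t x) := by
      simp only [noisyCopyScreen, Matrix.one_apply_eq]
      ring
    rw [regroup]
    positivity
  · simp only [noisyCopyScreen, Matrix.one_apply_ne hxy, mul_zero, zero_mul, sub_zero, zero_add]
    positivity

theorem exists_mem_Ioo_forall_pos_imp_lt {ι : Type*} [Finite ι] (f : ι → ℝ) :
    ∃ c ∈ Set.Ioo (0 : ℝ) 1, ∀ i, 0 < f i → c < f i := by
  have eventually_lt : ∀ᶠ c in nhdsWithin (0 : ℝ) (Set.Ioi 0), ∀ i, 0 < f i → c < f i :=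
    Filter.eventually_all.2 fun i => Filter.eventually_imp_distrib_left.2 fun hi =>
      Filter.eventually_of_mem (Ioo_mem_nhdsGT hi) fun _ => And.right
  exact ((Filter.eventually_of_mem (Ioo_mem_nhdsGT one_pos) fun _ => id).and eventually_lt).exists

theorem exists_pos_mul_le_mul_sq [Finite A] {w : A → ℝ} (hw : ∀ a, 0 ≤ w a) {ρ : ℝ} (hρ : ρ < 1) :
    ∃ κ > 0, ∀ a, κ * w a ≤ (1 - ρ) ^ 2 * w a ^ 2 := by
  obtain ⟨c, ⟨hc₀, -⟩, hc⟩ := exists_mem_Ioo_forall_pos_imp_lt w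
  have : 0 < 1 - ρ := sub_pos.2 hρ
  refine ⟨(1 - ρ) ^ 2 * c, by positivity, fun a => ?_⟩
  rw [sq (w a), ← mul_assoc]
  rcases (hw a).eq_or_lt with ha | ha
  · simp [← ha]
  · gcongr
    exact (hc a ha).le

variable [Fintype A]

theorem noisyCopy_mul_apply {B : Type} (w : A → ℝ) (lam : ℝ) (W : Matrix A B ℝ) (a : A) (b : B) :
    (noisyCopy w lam * W) a b = lam * (w a * W a b) + (1 - lam) * (w a * ∑ a', w a' * W a' b) := by
  simp [noisyCopy, Matrix.add_mul, Matrix.smul_mul, Matrix.diagonal_mul, Matrix.vecMulVec_mul,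
    Matrix.vecMulVec_apply, Matrix.vecMul, dotProduct]

theorem sum_mul_one_apply (f : A → ℝ) (x : A) : ∑ s, f s * δ s x = f x := by
  simp [Matrix.one_apply]

theorem sum_noisyCopyScreen {w : A → ℝ} (hw : ∑ a, w a = 1) (ρ κ : ℝ) (x y s : A) :
    ∑ t, noisyCopyScreen w ρ κ x y s t = w s *
      (ρ * δ s x + (1 - ρ) * w x) *
      (ρ * δ s y + (1 - ρ) * w y) := by
  simp only [noisyCopyScreen, mul_add, Finset.sum_add_distrib, Finset.sum_sub_distrib,
    ← Finset.mul_sum, hw]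
  by_cases hsx : s = x <;> by_cases hsy : s = y <;> by_cases hxy : x = y <;>
    simp_all [Matrix.one_apply] <;> ring

theorem sum_sum_noisyCopyScreen_snd {w : A → ℝ} (hw : ∑ a, w a = 1) (ρ κ : ℝ) (x y : A) :
    ∑ s, ∑ t, noisyCopyScreen w ρ κ x y s t = noisyCopy w (ρ ^ 2) x y := by
  have expand (s : A) : w s * (ρ * δ s x + (1 - ρ) * w x) *
        (ρ * δ s y + (1 - ρ) * w y) =
      ρ ^ 2 * (w s * δ s y * δ s x)
        + ρ * (1 - ρ) * w y * (w s * δ s x)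
        + ρ * (1 - ρ) * w x * (w s * δ s y)
        + (1 - ρ) ^ 2 * w x * w y * w s := by ring
  simp only [sum_noisyCopyScreen hw, expand, Finset.sum_add_distrib, ← Finset.mul_sum, hw,
    sum_mul_one_apply, noisyCopy_apply]
  ring

theorem sum_sum_noisyCopyScreen_fst {w : A → ℝ} (hw : ∑ a, w a = 1) (ρ κ : ℝ) (s t : A) :
    ∑ x, ∑ y, noisyCopyScreen w ρ κ x y s t = noisyCopy w (ρ ^ 2 - κ) s t := by
  have correction (x : A) :
      w x * (δ x s - w s) * (δ x t - w t) =
        w x * δ x t * δ x s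
          - w s * (w x * δ x t) - w t * (w x * δ x s)
          + w s * w t * w x := by
    ring
  have sum_one_apply (x : A) : ∑ y : A, δ x y = 1 := by simp [Matrix.one_apply]
  simp only [noisyCopyScreen_swap w ρ κ, Finset.sum_sub_distrib, sum_sum_noisyCopyScreen_snd hw,
    ← Finset.mul_sum, sum_one_apply, mul_one, correction, Finset.sum_add_distrib,
    sum_mul_one_apply, hw, noisyCopy_apply]
  ring

theorem isScreeningLaw_noisyCopyScreen {w : A → ℝ} (hw : IsProb w) {ρ κ : ℝ} (hρ₀ : 0 ≤ ρ)
    (hρ₁ : ρ ≤ 1) (hκ₀ : 0 ≤ κ) (hκ₁ : κ ≤ ρ ^ 2) (hκw : ∀ a, κ * w a ≤ (1 - ρ) ^ 2 * w a ^ 2) :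
    IsScreeningLaw (noisyCopyScreen w ρ κ) (noisyCopy w (ρ ^ 2)) (noisyCopy w (ρ ^ 2 - κ)) where
  nonneg := noisyCopyScreen_nonneg hw.1 hρ₀ hρ₁ hκ₀ hκ₁ hκw
  symm := noisyCopyScreen_symm w ρ κ
  exists_factorization s := ⟨_, _, fun x y => sum_noisyCopyScreen hw.2 ρ κ x y s⟩
  sum_screens := sum_sum_noisyCopyScreen_snd hw.2 ρ κ
  sum_screened := sum_sum_noisyCopyScreen_fst hw.2 ρ κ

theorem sum_sum_noisyCopy {w : A → ℝ} (hw : ∑ a, w a = 1) (lam : ℝ) :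
    ∑ x, ∑ y, noisyCopy w lam x y = 1 := by
  simp [noisyCopy, Matrix.diagonal_apply, Matrix.vecMulVec_apply, Finset.sum_add_distrib,
    ← Finset.mul_sum, hw]

theorem isGoodLaw_noisyCopy {w : A → ℝ} (hw : IsProb w) {lam : ℝ} (hlam₀ : 0 ≤ lam)
    (hlam₁ : lam < 1) : IsGoodLaw (noisyCopy w lam) := by
  have sqrt_lt_one : √lam < 1 := by rwa [Real.sqrt_lt' one_pos, one_pow]
  obtain ⟨κ₀, hκ₀, hκw⟩ := exists_pos_mul_le_mul_sq hw.1 sqrt_lt_one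
  suffices descent : ∀ (n : ℕ) (l : ℝ), 0 ≤ l → l ≤ lam → l ≤ n * κ₀ → IsGoodLaw (noisyCopy w l) by
    obtain ⟨n, hn⟩ := exists_nat_ge (lam / κ₀)
    exact descent n lam hlam₀ le_rfl ((div_le_iff₀ hκ₀).1 hn)
  intro n
  induction n with
  | zero =>
    intro l hl₀ _ hl
    obtain rfl : l = 0 := le_antisymm (by simpa using hl) hl₀
    simpa [noisyCopy] using isGoodLaw_vecMulVec hw.2 hw.2
  | succ n ih =>
    intro l hl₀ hl_le hl
    set κ := min κ₀ l
    have hκ : 0 ≤ κ := le_min hκ₀.le hl₀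
    have good_decorrelated : IsGoodLaw (noisyCopy w (√l ^ 2 - κ)) := by
      rw [Real.sq_sqrt hl₀]
      refine ih _ (sub_nonneg.2 (min_le_right _ _)) (by linarith) ?_
      push_cast at hl
      rcases min_cases κ₀ l with ⟨h, -⟩ | ⟨h, -⟩ <;> simp only [κ, h] <;> nlinarith
    have sqrt_le : √l ≤ √lam := Real.sqrt_le_sqrt hl_le
    have screening := isScreeningLaw_noisyCopyScreen hw (Real.sqrt_nonneg l)
      (sqrt_le.trans sqrt_lt_one.le) hκ ((min_le_right _ _).trans (Real.sq_sqrt hl₀).ge) fun a =>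
        calc κ * w a ≤ κ₀ * w a := mul_le_mul_of_nonneg_right (min_le_left _ _) (hw.1 a)
          _ ≤ (1 - √lam) ^ 2 * w a ^ 2 := hκw a
          _ ≤ (1 - √l) ^ 2 * w a ^ 2 := by gcongr
    simpa only [Real.sq_sqrt hl₀] using
      screening.isGoodLaw (sum_sum_noisyCopy hw.2 _) good_decorrelated

end NoisyCopy

section RectangularSupport

variable {A B : Type} {M : Matrix A B ℝ} {P : Set A} {Q : Set B}

/-- The positive entries of `M` are those in the rectangle `P ×ˢ Q`. -/
def HasRectSupport (M : Matrix A B ℝ) (P : Set A) (Q : Set B) : Prop :=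
  ∀ a b, 0 < M a b ↔ a ∈ P ∧ b ∈ Q

/-- `R` writes `M` as a sum of nonnegative matrices of rank at most one. -/
structure IsRankOneDecomposition {T : Type} [Fintype T] (R : T → Matrix A B ℝ)
    (M : Matrix A B ℝ) : Prop where
  nonneg : ∀ i a b, 0 ≤ R i a b
  exists_eq_vecMulVec : ∀ i, ∃ x z, R i = Matrix.vecMulVec x z
  sum_eq : ∑ i, R i = M

theorem IsRankOneDecomposition.sum_apply {T : Type} [Fintype T] {R : T → Matrix A B ℝ}
    (hR : IsRankOneDecomposition R M) (a : A) (b : B) : ∑ i, R i a b = M a b := by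
  rw [← hR.sum_eq, Matrix.sum_apply]

theorem IsChannel.exists_eq_convexComb [Finite A] [Fintype B] {D : Matrix A B ℝ} (hD : IsChannel D)
    {S : B → ℝ} (hS : IsProb S) (hDS : ∀ a b, 0 < D a b ↔ 0 < S b) :
    ∃ ε ∈ Set.Ioo (0 : ℝ) 1, ∃ W : Matrix A B ℝ, IsChannel W ∧ (∀ a b, 0 < W a b ↔ 0 < S b) ∧
      ∀ a b, D a b = (1 - ε) * W a b + ε * S b := by
  obtain ⟨ε, hε, hlt⟩ := exists_mem_Ioo_forall_pos_imp_lt fun p : A × B => D p.1 p.2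
  have one_sub_pos : 0 < 1 - ε := sub_pos.2 hε.2
  have S_le_one (b : B) : S b ≤ 1 :=
    hS.2 ▸ Finset.single_le_sum (fun b _ => hS.1 b) (Finset.mem_univ b)
  set W : Matrix A B ℝ := fun a b => (D a b - ε * S b) / (1 - ε)
  have W_pos (a : A) (b : B) (hb : 0 < S b) : 0 < W a b := by
    have ε_lt := hlt (a, b) ((hDS a b).2 hb)
    exact div_pos (sub_pos.2 ((mul_le_of_le_one_right hε.1.le (S_le_one b)).trans_lt ε_lt))
      one_sub_pos
  have W_eq_zero (a : A) (b : B) (hb : S b = 0) : W a b = 0 := by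
    have D_eq_zero : D a b = 0 :=
      le_antisymm (not_lt.1 fun h => ((hDS a b).1 h).ne' hb) (hD.nonneg a b)
    simp [W, hb, D_eq_zero]
  refine ⟨ε, hε, W, ⟨fun a b => ?_, fun a => ?_⟩, fun a b => ⟨fun h => ?_, W_pos a b⟩,
    fun a b => ?_⟩
  · rcases (hS.1 b).eq_or_lt with hb | hb
    · exact (W_eq_zero a b hb.symm).ge
    · exact (W_pos a b hb).le
  · rw [← Finset.sum_div, Finset.sum_sub_distrib, ← Finset.mul_sum, hD.sum_row, hS.2, mul_one,
      div_self one_sub_pos.ne']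
  · exact lt_of_le_of_ne' (hS.1 b) fun hb => h.ne' (W_eq_zero a b hb)
  · simp only [W]
    field_simp
    ring

variable [Fintype A] [Fintype B]

theorem IsJointLaw.isProb_row (hM : IsJointLaw M) : IsProb fun a => ∑ b, M a b :=
  ⟨fun a => Finset.sum_nonneg fun b _ => hM.nonneg a b, hM.sum_eq_one⟩

theorem IsJointLaw.isProb_col (hM : IsJointLaw M) : IsProb fun b => ∑ a, M a b :=
  ⟨fun b => Finset.sum_nonneg fun a _ => hM.nonneg a b, Finset.sum_comm.trans hM.sum_eq_one⟩

/-- The conditional law of the column given the row. A row of probability zero gets the marginal law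
of the column, so that a law with rectangular support has all its conditional laws equivalent. -/
noncomputable def condLaw (M : Matrix A B ℝ) : Matrix A B ℝ :=
  fun a b => if ∑ b', M a b' = 0 then ∑ a', M a' b else M a b / ∑ b', M a b'

theorem IsJointLaw.isChannel_condLaw (hM : IsJointLaw M) : IsChannel (condLaw M) where
  nonneg a b := by
    unfold condLaw
    split_ifs
    · exact hM.isProb_col.1 b
    · exact div_nonneg (hM.nonneg a b) (hM.isProb_row.1 a)
  sum_row a := by
    unfold condLaw
    split_ifs with ha
    · exact hM.isProb_col.2
    · rw [← Finset.sum_div, div_self ha]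

theorem IsJointLaw.sum_row_mul_condLaw (hM : IsJointLaw M) (a : A) (b : B) :
    (∑ b', M a b') * condLaw M a b = M a b := by
  unfold condLaw
  split_ifs with ha
  · rw [ha, zero_mul, (Finset.sum_eq_zero_iff_of_nonneg fun b _ => hM.nonneg a b).1 ha b
      (Finset.mem_univ b)]
  · exact mul_div_cancel₀ _ ha

theorem IsJointLaw.exists_pos (hM : IsJointLaw M) : ∃ a b, 0 < M a b := by
  by_contra! h
  have sum_nonpos : ∑ a, ∑ b, M a b ≤ 0 :=
    Finset.sum_nonpos fun a _ => Finset.sum_nonpos fun b _ => h a b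
  exact (hM.sum_eq_one ▸ sum_nonpos).not_gt one_pos

theorem IsJointLaw.sum_row_pos_iff (hM : IsJointLaw M) (hsupp : HasRectSupport M P Q) {a : A} :
    0 < ∑ b, M a b ↔ a ∈ P := by
  obtain ⟨a₀, b₀, h₀⟩ := hM.exists_pos
  have Q_nonempty : ∃ b, b ∈ Q := ⟨b₀, ((hsupp a₀ b₀).1 h₀).2⟩
  simp [Finset.sum_pos_iff_of_nonneg fun b _ => hM.nonneg a b, hsupp a, Q_nonempty]

theorem IsJointLaw.sum_col_pos_iff (hM : IsJointLaw M) (hsupp : HasRectSupport M P Q) {b : B} :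
    0 < ∑ a, M a b ↔ b ∈ Q := by
  obtain ⟨a₀, b₀, h₀⟩ := hM.exists_pos
  have P_nonempty : ∃ a, a ∈ P := ⟨a₀, ((hsupp a₀ b₀).1 h₀).1⟩
  simp [Finset.sum_pos_iff_of_nonneg fun a _ => hM.nonneg a b, fun a => hsupp a b, P_nonempty]

theorem IsJointLaw.condLaw_pos_iff (hM : IsJointLaw M) (hsupp : HasRectSupport M P Q) (a : A)
    (b : B) : 0 < condLaw M a b ↔ 0 < ∑ a', M a' b := by
  unfold condLaw
  split_ifs with ha
  · rfl
  · have row_pos : 0 < ∑ b', M a b' := lt_of_le_of_ne' (hM.isProb_row.1 a) ha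
    rw [div_pos_iff_of_pos_right row_pos, hsupp, hM.sum_col_pos_iff hsupp,
      and_iff_right ((hM.sum_row_pos_iff hsupp).1 row_pos)]

theorem IsJointLaw.exists_eq_noisyCopy_mul (hM : IsJointLaw M) (hsupp : HasRectSupport M P Q) :
    ∃ lam ∈ Set.Ioo (0 : ℝ) 1, ∃ W : Matrix A B ℝ, IsChannel W ∧ (∀ a b, 0 < W a b ↔ b ∈ Q) ∧
      M = noisyCopy (fun a => ∑ b, M a b) lam * W := by
  obtain ⟨ε, hε, W, hW, hW_pos, hW_eq⟩ :=
    hM.isChannel_condLaw.exists_eq_convexComb hM.isProb_col (hM.condLaw_pos_iff hsupp)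
  refine ⟨1 - ε, ⟨sub_pos.2 hε.2, sub_lt_self 1 hε.1⟩, W, hW,
    fun a b => (hW_pos a b).trans (hM.sum_col_pos_iff hsupp), ?_⟩
  have row_mul (a : A) (b : B) :
      M a b = (∑ b', M a b') * ((1 - ε) * W a b + ε * ∑ a', M a' b) := by
    rw [← hW_eq, hM.sum_row_mul_condLaw]
  have push_row (b : B) : ∑ a, (∑ b', M a b') * W a b = ∑ a, M a b := by
    have sum_row_mul := calc
      ∑ a, M a b = ∑ a, (∑ b', M a b') * ((1 - ε) * W a b + ε * ∑ a', M a' b) :=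
        Finset.sum_congr rfl fun a _ => row_mul a b
      _ = (1 - ε) * ∑ a, (∑ b', M a b') * W a b + (∑ a, ∑ b', M a b') * (ε * ∑ a, M a b) := by
        simp only [mul_add, Finset.sum_add_distrib, mul_left_comm _ (1 - ε), ← Finset.mul_sum,
          ← Finset.sum_mul]
    rw [hM.sum_eq_one] at sum_row_mul
    exact mul_left_cancel₀ (sub_pos.2 hε.2).ne' (by linarith)
  ext a b
  rw [noisyCopy_mul_apply, push_row]
  conv_lhs => rw [row_mul]
  ring

theorem IsJointLaw.isGoodLaw_of_hasRectSupport (hM : IsJointLaw M) (hsupp : HasRectSupport M P Q) :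
    IsGoodLaw M := by
  obtain ⟨lam, ⟨hlam₀, hlam₁⟩, W, hW, -, hMW⟩ := hM.exists_eq_noisyCopy_mul hsupp
  have sqrt_le_one : √lam ≤ 1 := Real.sqrt_le_one.2 hlam₁.le
  have screening := (isScreeningLaw_noisyCopyScreen hM.isProb_row (Real.sqrt_nonneg lam) sqrt_le_one
    le_rfl (sq_nonneg _) fun a => by simpa using by positivity).mul hW
  rw [Real.sq_sqrt hlam₀.le, sub_zero, ← hMW] at screening
  exact screening.isGoodLaw hM.sum_eq_one (isGoodLaw_noisyCopy hM.isProb_row hlam₀.le hlam₁)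

theorem mul_pos_iff_pos_and_pos {x y : ℝ} (hx : 0 ≤ x) (hy : 0 ≤ y) :
    0 < x * y ↔ 0 < x ∧ 0 < y := by
  simp only [(mul_nonneg hx hy).lt_iff_ne', hx.lt_iff_ne', hy.lt_iff_ne', mul_ne_zero_iff]

theorem IsJointLaw.exists_isRankOneDecomposition (hM : IsJointLaw M)
    (hsupp : HasRectSupport M P Q) :
    ∃ R : A → Matrix A B ℝ, IsRankOneDecomposition R M ∧
      ∀ i a b, 0 < R i a b ↔ i ∈ P ∧ a ∈ P ∧ b ∈ Q := by
  obtain ⟨lam, ⟨hlam₀, hlam₁⟩, W, hW, hW_pos, hMW⟩ := hM.exists_eq_noisyCopy_mul hsupp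
  set w := fun a => ∑ b, M a b
  have copy_nonneg (a i : A) : 0 ≤ noisyCopy w lam a i :=
    noisyCopy_nonneg hM.isProb_row.1 hlam₀.le hlam₁.le a i
  refine ⟨fun i => Matrix.vecMulVec (fun a => noisyCopy w lam a i) (W i),
    ⟨fun i a b => mul_nonneg (copy_nonneg a i) (hW.nonneg i b), fun i => ⟨_, _, rfl⟩, ?_⟩,
    fun i a b => ?_⟩
  · conv_rhs => rw [hMW]
    ext a b
    simp [Matrix.sum_apply, Matrix.vecMulVec_apply, Matrix.mul_apply]
  · change 0 < noisyCopy w lam a i * W i b ↔ _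
    rw [mul_pos_iff_pos_and_pos (copy_nonneg a i) (hW.nonneg i b), hW_pos,
      noisyCopy_pos_iff hM.isProb_row.1 hlam₀.le hlam₁, hM.sum_row_pos_iff hsupp,
      hM.sum_row_pos_iff hsupp, and_comm (a := a ∈ P), and_assoc]

end RectangularSupport

section LazyCoupling

variable {A B T : Type}

/-- The law of a quadruple `(a, b, s, t)` where `s` is the index of the summand of `∑ i, R i` that
produced `(a, b)`. A second index `t` is proposed with probability `R t a b` (no index is proposed
with the remaining probability) and replaces `s` if it is adjacent to `s`; otherwise `t = s`. -/
noncomputable def lazyCoupling (adj : T → T → Prop) [Fintype T] (R : T → Matrix A B ℝ) (a : A)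
    (b : B) (s t : T) : ℝ :=
  (if adj s t then R s a b * R t a b else 0) +
    if s = t then R s a b * (1 - ∑ u, if adj s u then R u a b else 0) else 0

variable [Fintype T] {adj : T → T → Prop} {R : T → Matrix A B ℝ}

theorem lazyCoupling_symm (hadj : ∀ s t, adj s t ↔ adj t s) (a : A) (b : B) (s t : T) :
    lazyCoupling adj R a b s t = lazyCoupling adj R a b t s := by
  obtain rfl | hst := eq_or_ne s t
  · rfl
  · simp [lazyCoupling, hadj s t, mul_comm (R s a b), hst, hst.symm]

theorem sum_lazyCoupling (a : A) (b : B) (s : T) :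
    ∑ t, lazyCoupling adj R a b s t = R s a b := by
  simp only [lazyCoupling, Finset.sum_add_distrib, Finset.sum_ite_eq, Finset.mem_univ, if_true,
    mul_sub, mul_one, Finset.mul_sum, mul_ite, mul_zero, add_sub_cancel]

theorem sum_adj_le_one (hR : ∀ i a b, 0 ≤ R i a b) {a : A} {b : B} (hsum : ∑ i, R i a b ≤ 1)
    (s : T) : ∑ u, (if adj s u then R u a b else 0) ≤ 1 :=
  (Finset.sum_le_sum fun u _ => by split_ifs <;> simp [hR u a b]).trans hsum

theorem lazyCoupling_nonneg (hR : ∀ i a b, 0 ≤ R i a b) {a : A} {b : B}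
    (hsum : ∑ i, R i a b ≤ 1) (s t : T) : 0 ≤ lazyCoupling adj R a b s t := by
  have hs := hR s a b
  have ht := hR t a b
  have stay_nonneg := sub_nonneg.2 (sum_adj_le_one (adj := adj) hR hsum s)
  rw [lazyCoupling]
  positivity

theorem lazyCoupling_pos_iff (hrefl : ∀ s, adj s s) (hR : ∀ i a b, 0 ≤ R i a b) {a : A} {b : B}
    (hsum : ∑ i, R i a b ≤ 1) (s t : T) :
    0 < lazyCoupling adj R a b s t ↔ adj s t ∧ 0 < R s a b ∧ 0 < R t a b := by
  obtain rfl | hst := eq_or_ne s t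
  · have stay_nonneg := sub_nonneg.2 (sum_adj_le_one (adj := adj) hR hsum s)
    rcases (hR s a b).eq_or_lt with hs | hs
    · simp [lazyCoupling, ← hs]
    · simp only [lazyCoupling, hrefl, if_true, hs, and_self, iff_true]
      positivity
  · rw [lazyCoupling, if_neg hst, add_zero, ← mul_pos_iff_pos_and_pos (hR s a b) (hR t a b)]
    split_ifs with h <;> simp [h]

variable [Fintype A] [Fintype B] {M : Matrix A B ℝ}

theorem IsJointLaw.le_one (hM : IsJointLaw M) (a : A) (b : B) : M a b ≤ 1 :=
  calc M a b ≤ ∑ b, M a b :=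
        Finset.single_le_sum (fun b _ => hM.nonneg a b) (Finset.mem_univ b)
    _ ≤ ∑ a, ∑ b, M a b :=
        Finset.single_le_sum (fun a _ => hM.isProb_row.1 a) (Finset.mem_univ a)
    _ = 1 := hM.sum_eq_one

theorem IsScreeningLaw.isJointLaw {F : A → B → T → T → ℝ} {C : Matrix T T ℝ}
    (hF : IsScreeningLaw F M C) (hM : ∑ a, ∑ b, M a b = 1) : IsJointLaw C where
  nonneg s t := by
    rw [← hF.sum_screened]
    exact Finset.sum_nonneg fun a _ => Finset.sum_nonneg fun b _ => hF.nonneg a b s t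
  sum_eq_one := by
    have swap := Finset.sum_comm (s := (Finset.univ : Finset (T × T)))
      (t := (Finset.univ : Finset (A × B))) (f := fun p q => F q.1 q.2 p.1 p.2)
    simpa only [Fintype.sum_prod_type, hF.sum_screened, hF.sum_screens, hM] using swap

theorem IsRankOneDecomposition.isScreeningLaw_lazyCoupling (hR : IsRankOneDecomposition R M)
    (hM : IsJointLaw M) (hadj : ∀ s t, adj s t ↔ adj t s) :
    IsScreeningLaw (lazyCoupling adj R) M fun s t => ∑ a, ∑ b, lazyCoupling adj R a b s t where
  nonneg a b := lazyCoupling_nonneg hR.nonneg (hR.sum_apply a b ▸ hM.le_one a b)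
  symm := lazyCoupling_symm hadj
  exists_factorization s := by
    obtain ⟨x, z, hxz⟩ := hR.exists_eq_vecMulVec s
    exact ⟨x, z, fun a b => by rw [sum_lazyCoupling, hxz, Matrix.vecMulVec_apply]⟩
  sum_screens a b := by simp only [sum_lazyCoupling, hR.sum_apply]
  sum_screened _ _ := rfl

theorem IsRankOneDecomposition.exists_isScreeningLaw (hR : IsRankOneDecomposition R M)
    (hM : IsJointLaw M) (hrefl : ∀ s, adj s s) (hadj : ∀ s t, adj s t ↔ adj t s) :
    ∃ F C, IsScreeningLaw F M C ∧
      ∀ s t : T, 0 < C s t ↔ adj s t ∧ ∃ a b, 0 < R s a b ∧ 0 < R t a b := by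
  have sum_le_one (a : A) (b : B) : ∑ i, R i a b ≤ 1 := hR.sum_apply a b ▸ hM.le_one a b
  have F_nonneg (a : A) (b : B) := lazyCoupling_nonneg (adj := adj) hR.nonneg (sum_le_one a b)
  refine ⟨_, _, hR.isScreeningLaw_lazyCoupling hM hadj, fun s t => ?_⟩
  simp [Finset.sum_pos_iff_of_nonneg, Finset.sum_nonneg, F_nonneg,
    lazyCoupling_pos_iff hrefl hR.nonneg (sum_le_one _ _)]

end LazyCoupling

section RectangleChain

theorem exists_eq_sum_of_pos_iff_exists_mem {ι X : Type*} [Fintype ι] {f : X → ℝ}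
    (hf : ∀ x, 0 ≤ f x) {U : ι → Set X} (hU : ∀ x, 0 < f x ↔ ∃ i, x ∈ U i) :
    ∃ g : ι → X → ℝ, (∀ i x, 0 ≤ g i x) ∧ (∀ i x, 0 < g i x ↔ x ∈ U i) ∧ ∀ x, ∑ i, g i x = f x := by
  set count : X → ℕ := fun x => (Finset.univ.filter fun i => x ∈ U i).card
  have share_pos {i : ι} {x : X} (hi : x ∈ U i) : 0 < f x / count x :=
    div_pos ((hU x).2 ⟨i, hi⟩) (Nat.cast_pos.2 (Finset.card_pos.2 ⟨i, by simpa using hi⟩))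
  refine ⟨fun i x => if x ∈ U i then f x / count x else 0, fun i x => ?_, fun i x => ?_,
    fun x => ?_⟩
  · beta_reduce
    split_ifs with hi
    exacts [(share_pos hi).le, le_rfl]
  · beta_reduce
    split_ifs with hi
    exacts [iff_of_true (share_pos hi) hi, iff_of_false (lt_irrefl 0) hi]
  · rw [← Finset.sum_filter, Finset.sum_const, nsmul_eq_mul]
    rcases (hf x).eq_or_lt with hx | hx
    · simp [← hx]
    · obtain ⟨i, hi⟩ := (hU x).1 hx
      exact mul_div_cancel₀ _ (Nat.cast_pos.2 (Finset.card_pos.2 ⟨i, by simpa using hi⟩)).ne'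

theorem nonempty_inter_of_le_succ {X : Type*} {l : ℕ} {P : ℕ → Set X}
    (overlap : ∀ t < l + 1, (P t ∩ P (t + 1)).Nonempty) {t u : ℕ} (ht : t ≤ l + 1) (hu : u ≤ l + 1)
    (htu : t ≤ u + 1) (hut : u ≤ t + 1) : (P t ∩ P u).Nonempty := by
  obtain rfl | rfl | rfl : t = u + 1 ∨ u = t + 1 ∨ t = u := by omega
  · rw [Set.inter_comm]
    exact overlap u (by omega)
  · exact overlap t (by omega)
  · rw [Set.inter_self]
    rcases t with - | t
    · exact (overlap 0 (by omega)).left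
    · exact (overlap t (by omega)).right

variable {A B : Type} {M : Matrix A B ℝ} {l : ℕ}

/-- The positive entries of `M` form a union of rectangles `P t ×ˢ Q t`, `t ≤ l`, in which
consecutive rectangles intersect. -/
def HasRectangleChain (M : Matrix A B ℝ) (l : ℕ) : Prop :=
  ∃ (P : ℕ → Set A) (Q : ℕ → Set B), (∀ a b, 0 < M a b ↔ ∃ t ≤ l, a ∈ P t ∧ b ∈ Q t) ∧
    ∀ t < l, (P t ∩ P (t + 1)).Nonempty ∧ (Q t ∩ Q (t + 1)).Nonempty

theorem IsRankOneDecomposition.sum {ι T : Type} [Fintype ι] [Fintype T]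
    {R : ι → T → Matrix A B ℝ} {N : ι → Matrix A B ℝ}
    (hR : ∀ i, IsRankOneDecomposition (R i) (N i)) :
    IsRankOneDecomposition (fun p : ι × T => R p.1 p.2) (∑ i, N i) where
  nonneg p := (hR p.1).nonneg p.2
  exists_eq_vecMulVec p := (hR p.1).exists_eq_vecMulVec p.2
  sum_eq := by simp only [Fintype.sum_prod_type, (hR _).sum_eq]

theorem HasRectSupport.exists_isRankOneDecomposition [Fintype A] [Finite B] {P : Set A}
    {Q : Set B} (hM : ∀ a b, 0 ≤ M a b) (hsupp : HasRectSupport M P Q) :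
    ∃ R : A → Matrix A B ℝ, IsRankOneDecomposition R M ∧
      ∀ i a b, 0 < R i a b ↔ i ∈ P ∧ a ∈ P ∧ b ∈ Q := by
  have := Fintype.ofFinite B
  by_cases hpos : ∃ a b, 0 < M a b
  · obtain ⟨a₀, b₀, h₀⟩ := hpos
    set c := ∑ a, ∑ b, M a b
    have row_nonneg (a : A) : 0 ≤ ∑ b, M a b := Finset.sum_nonneg fun b _ => hM a b
    have mass_pos : 0 < c := Finset.sum_pos' (fun a _ => row_nonneg a) ⟨a₀, Finset.mem_univ _,
      Finset.sum_pos' (fun b _ => hM a₀ b) ⟨b₀, Finset.mem_univ _, h₀⟩⟩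
    have law : IsJointLaw (c⁻¹ • M) :=
      ⟨fun a b => mul_nonneg (inv_nonneg.2 mass_pos.le) (hM a b), by
        simp [← Finset.mul_sum, c, inv_mul_cancel₀ mass_pos.ne']⟩
    have law_supp : HasRectSupport (c⁻¹ • M) P Q := fun a b => by
      simp [mul_pos_iff_of_pos_left (inv_pos.2 mass_pos), hsupp a b]
    obtain ⟨R, hR, hR_pos⟩ := law.exists_isRankOneDecomposition law_supp
    refine ⟨fun i => c • R i, ⟨fun i a b => mul_nonneg mass_pos.le (hR.nonneg i a b), fun i => ?_,
      ?_⟩, fun i a b => (mul_pos_iff_of_pos_left mass_pos).trans (hR_pos i a b)⟩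
    · obtain ⟨x, z, hxz⟩ := hR.exists_eq_vecMulVec i
      exact ⟨c • x, z, by rw [hxz, Matrix.smul_vecMulVec]⟩
    · rw [← Finset.smul_sum, hR.sum_eq, smul_inv_smul₀ mass_pos.ne']
  · have M_eq_zero : M = 0 := by
      ext a b
      exact le_antisymm (not_lt.1 fun h => hpos ⟨a, b, h⟩) (hM a b)
    exact ⟨0, ⟨by simp, fun i => ⟨0, 0, by simp⟩, by simp [M_eq_zero]⟩,
      fun i a b => by simp [← hsupp a b, M_eq_zero]⟩

theorem exists_isRankOneDecomposition_of_pos_iff {ι : Type} [Fintype ι] [Fintype A] [Finite B]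
    {P : ι → Set A} {Q : ι → Set B} (hM : ∀ a b, 0 ≤ M a b)
    (hPQ : ∀ a b, 0 < M a b ↔ ∃ i, a ∈ P i ∧ b ∈ Q i) :
    ∃ R : ι × A → Matrix A B ℝ, IsRankOneDecomposition R M ∧
      ∀ p a b, 0 < R p a b ↔ p.2 ∈ P p.1 ∧ a ∈ P p.1 ∧ b ∈ Q p.1 := by
  obtain ⟨g, g_nonneg, g_pos, g_sum⟩ := exists_eq_sum_of_pos_iff_exists_mem
    (f := fun p : A × B => M p.1 p.2) (U := fun i => P i ×ˢ Q i) (fun p => hM p.1 p.2)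
    fun p => hPQ p.1 p.2
  set N : ι → Matrix A B ℝ := fun i a b => g i (a, b)
  have sum_N : ∑ i, N i = M := by
    ext a b
    rw [Matrix.sum_apply]
    exact g_sum (a, b)
  have supp_N (i : ι) : HasRectSupport (N i) (P i) (Q i) := fun a b => g_pos i (a, b)
  choose R hR R_pos using fun i =>
    (supp_N i).exists_isRankOneDecomposition fun a b => g_nonneg i (a, b)
  exact ⟨_, sum_N ▸ IsRankOneDecomposition.sum hR, fun p => R_pos p.1 p.2⟩

variable [Fintype A] [Fintype B]

theorem IsJointLaw.exists_isScreeningLaw_hasRectangleChain (hM : IsJointLaw M)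
    (hchain : HasRectangleChain M (l + 1)) :
    ∃ (F : A → B → Fin (l + 2) × A → Fin (l + 2) × A → ℝ) (C : Matrix _ _ ℝ),
      IsScreeningLaw F M C ∧ HasRectangleChain C l := by
  obtain ⟨P, Q, hPQ, overlap⟩ := hchain
  obtain ⟨R, hR, R_pos⟩ := exists_isRankOneDecomposition_of_pos_iff (ι := Fin (l + 2))
    (P := fun t => P t) (Q := fun t => Q t) hM.nonneg fun a b => by
      simp [hPQ, Fin.exists_iff, Nat.lt_succ_iff, and_left_comm]
  obtain ⟨F, C, hF, C_pos⟩ := hR.exists_isScreeningLaw hM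
    (adj := fun σ τ => (σ.1 : ℕ) ≤ τ.1 + 1 ∧ (τ.1 : ℕ) ≤ σ.1 + 1) (by simp) (by simp [and_comm])
  set S : ℕ → Set (Fin (l + 2) × A) :=
    fun t => {σ | σ.2 ∈ P σ.1 ∧ ((σ.1 : ℕ) = t ∨ (σ.1 : ℕ) = t + 1)}
  refine ⟨F, C, hF, S, S, fun σ τ => (C_pos σ τ).trans ⟨?_, ?_⟩, fun t ht => ?_⟩
  · rintro ⟨adj, a, b, hσ, hτ⟩
    have hσ_mem := ((R_pos σ a b).1 hσ).1
    have hτ_mem := ((R_pos τ a b).1 hτ).1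
    refine ⟨min (min σ.1 τ.1) l, min_le_right _ _, ⟨hσ_mem, ?_⟩, hτ_mem, ?_⟩ <;> omega
  · rintro ⟨t, -, ⟨hσ, hσt⟩, hτ, hτt⟩
    have adj : (σ.1 : ℕ) ≤ τ.1 + 1 ∧ (τ.1 : ℕ) ≤ σ.1 + 1 := by omega
    obtain ⟨a, haσ, haτ⟩ := nonempty_inter_of_le_succ (fun t ht => (overlap t ht).1)
      (Nat.lt_succ_iff.1 σ.1.2) (Nat.lt_succ_iff.1 τ.1.2) adj.1 adj.2
    obtain ⟨b, hbσ, hbτ⟩ := nonempty_inter_of_le_succ (fun t ht => (overlap t ht).2)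
      (Nat.lt_succ_iff.1 σ.1.2) (Nat.lt_succ_iff.1 τ.1.2) adj.1 adj.2
    exact ⟨adj, a, b, (R_pos σ a b).2 ⟨hσ, haσ, hbσ⟩, (R_pos τ a b).2 ⟨hτ, haτ, hbτ⟩⟩
  · obtain ⟨a, -, ha⟩ := (overlap t (by omega)).1
    have mem_S : ((⟨t + 1, by omega⟩, a) : Fin (l + 2) × A) ∈ S t ∩ S (t + 1) :=
      ⟨⟨ha, .inr rfl⟩, ha, .inl rfl⟩
    exact ⟨⟨_, mem_S⟩, _, mem_S⟩

theorem IsJointLaw.isGoodLaw_of_hasRectangleChain (hM : IsJointLaw M)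
    (hchain : HasRectangleChain M l) : IsGoodLaw M := by
  induction l generalizing A B with
  | zero =>
    obtain ⟨P, Q, hPQ, -⟩ := hchain
    exact hM.isGoodLaw_of_hasRectSupport (P := P 0) (Q := Q 0) fun a b => by simp [hPQ]
  | succ l ih =>
    obtain ⟨F, C, hF, hC⟩ := hM.exists_isScreeningLaw_hasRectangleChain hchain
    exact hF.isGoodLaw hM.sum_eq_one (ih (hF.isJointLaw hM.sum_eq_one) hC)

end RectangleChain

section Connectivity

theorem exists_walk_forall_mem_support {V : Type*} [Finite V] {G : SimpleGraph V}
    (hG : G.Connected) : ∃ (u v : V) (p : G.Walk u v), ∀ w, w ∈ p.support := by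
  have := Fintype.ofFinite V
  obtain ⟨u⟩ := hG.nonempty
  suffices covering : ∀ S : Finset V, ∃ (v : V) (p : G.Walk u v), ∀ w ∈ S, w ∈ p.support by
    obtain ⟨v, p, hp⟩ := covering Finset.univ
    exact ⟨u, v, p, fun w => hp w (Finset.mem_univ w)⟩
  intro S
  induction S using Finset.induction_on with
  | empty => exact ⟨u, .nil, by simp⟩
  | insert x S _ ih =>
    obtain ⟨v, p, hp⟩ := ih
    obtain ⟨q⟩ := hG.preconnected v x
    refine ⟨x, p.append q, fun w hw => (p.mem_support_append_iff q).2 ?_⟩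
    rcases Finset.mem_insert.1 hw with rfl | hw
    · exact .inr q.end_mem_support
    · exact .inl (hp w hw)

variable {Ω A B : Type} {μ : Ω → ℝ} {α : Ω → A} {β : Ω → B}

/-- The graph on the sample points of positive probability that joins two points when `α` or `β`
does not distinguish them. -/
def supportGraph (μ : Ω → ℝ) (α : Ω → A) (β : Ω → B) : SimpleGraph {ω // 0 < μ ω} :=
  SimpleGraph.fromRel fun ω ω' => α ω = α ω' ∨ β ω = β ω'

theorem supportGraph_reachable {ω ω' : {ω // 0 < μ ω}} (h : α ω = α ω' ∨ β ω = β ω') :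
    (supportGraph μ α β).Reachable ω ω' := by
  obtain rfl | hne := eq_or_ne ω ω'
  · rfl
  · exact ((SimpleGraph.fromRel_adj _ _ _).2 ⟨hne, .inl h⟩).reachable

theorem supportGraph_preconnected (h : ¬ HasCommonBit μ α β) :
    (supportGraph μ α β).Preconnected := by
  intro ω₁ ω₂
  by_contra hreach
  refine h ⟨{a | ∃ ω, (supportGraph μ α β).Reachable ω₁ ω ∧ α ω = a},
    {b | ∃ ω, (supportGraph μ α β).Reachable ω₁ ω ∧ β ω = b}, fun ω hω => ⟨?_, ?_⟩,
    ⟨ω₁, ω₁.2, ω₁, .rfl, rfl⟩, ω₂, ω₂.2, ?_⟩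
  · rintro ⟨ω', hω', hα⟩
    exact ⟨⟨ω, hω⟩, hω'.trans (supportGraph_reachable (.inl hα)), rfl⟩
  · rintro ⟨ω', hω', hβ⟩
    exact ⟨⟨ω, hω⟩, hω'.trans (supportGraph_reachable (.inr hβ)), rfl⟩
  · rintro ⟨ω', hω', hα⟩
    exact hreach (hω'.trans (supportGraph_reachable (.inl hα)))

variable [Fintype Ω]

/-- The matrix of joint probabilities of `α` and `β`. -/
noncomputable def jointLaw (μ : Ω → ℝ) (α : Ω → A) (β : Ω → B) : Matrix A B ℝ :=
  fun a b => pr μ fun ω => α ω = a ∧ β ω = b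

theorem jointLaw_pos_iff (hμ : ∀ ω, 0 ≤ μ ω) {a : A} {b : B} :
    0 < jointLaw μ α β a b ↔ ∃ ω : {ω // 0 < μ ω}, α ω = a ∧ β ω = b := by
  simp only [jointLaw, pr_pos_iff hμ, Subtype.exists, exists_prop]
  exact exists_congr fun ω => and_comm

theorem isJointLaw_jointLaw [Fintype A] [Fintype B] (hμ : IsProb μ) (α : Ω → A) (β : Ω → B) :
    IsJointLaw (jointLaw μ α β) where
  nonneg a b := pr_nonneg hμ.1 _
  sum_eq_one := by
    have sum_pr (a : A) : ∑ b, jointLaw μ α β a b = pr μ fun ω => α ω = a :=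
      sum_pr_and_eq (fun ω => Finset.mem_univ (β ω)) _
    have sum_pr_mul := sum_pr_mul_eq (μ := μ) (fun ω => Finset.mem_univ (α ω)) 1
    simpa [sum_pr, hμ.2] using sum_pr_mul

theorem exists_hasRectangleChain_jointLaw (hμ : IsProb μ) (h : ¬ HasCommonBit μ α β) :
    ∃ l, HasRectangleChain (jointLaw μ α β) l := by
  have nonempty_support : Nonempty {ω // 0 < μ ω} := by
    by_contra! hempty
    have μ_nonpos : ∑ ω, μ ω ≤ 0 := Finset.sum_nonpos fun ω _ => not_lt.1 fun hω =>
      hempty.false ⟨ω, hω⟩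
    exact (hμ.2 ▸ μ_nonpos).not_gt one_pos
  obtain ⟨_, _, p, hp⟩ := exists_walk_forall_mem_support ⟨supportGraph_preconnected h⟩
  set e := p.getVert
  have indistinct (t : ℕ) : α (e t) = α (e (t + 1)) ∨ β (e t) = β (e (t + 1)) := by
    rcases lt_or_ge t p.length with ht | ht
    · rcases ((SimpleGraph.fromRel_adj _ _ _).1 (p.adj_getVert_succ ht)).2 with h | h
      · exact h
      · exact h.imp Eq.symm Eq.symm
    · simp only [e, p.getVert_of_length_le ht, p.getVert_of_length_le (ht.trans t.le_succ), true_or]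
  refine ⟨p.length, fun t => {α (e t), α (e (t + 1))}, fun t => {β (e t), β (e (t + 1))},
    fun a b => (jointLaw_pos_iff hμ.1).trans ⟨?_, ?_⟩, fun t _ =>
      ⟨⟨α (e (t + 1)), by simp⟩, β (e (t + 1)), by simp⟩⟩
  · rintro ⟨ω, rfl, rfl⟩
    obtain ⟨t, rfl, ht⟩ := SimpleGraph.Walk.mem_support_iff_exists_getVert.1 (hp ω)
    exact ⟨t, ht, .inl rfl, .inl rfl⟩
  · rintro ⟨t, -, rfl | rfl, rfl | rfl⟩ <;> rcases indistinct t with h | h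
    · exact ⟨e t, rfl, rfl⟩
    · exact ⟨e t, rfl, rfl⟩
    · exact ⟨e (t + 1), h.symm, rfl⟩
    · exact ⟨e t, rfl, h⟩
    · exact ⟨e t, h, rfl⟩
    · exact ⟨e (t + 1), rfl, h.symm⟩
    · exact ⟨e (t + 1), rfl, rfl⟩
    · exact ⟨e (t + 1), rfl, rfl⟩

theorem condIndep_iff_not_hasCommonBit [Finite A] [Finite B] (hμ : IsProb μ) :
    (∃ k, CondIndepOrder μ α β k) ↔ ¬ HasCommonBit μ α β := by
  have := Fintype.ofFinite A
  have := Fintype.ofFinite B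
  refine ⟨fun ⟨k, hk⟩ hbit => hbit.not_condIndepOrder hμ.1 k hk, fun hbit => ?_⟩
  obtain ⟨l, hl⟩ := exists_hasRectangleChain_jointLaw hμ hbit
  obtain ⟨k, hk⟩ := (isJointLaw_jointLaw hμ α β).isGoodLaw_of_hasRectangleChain hl
  exact ⟨k, hk.congr (pr_fst_snd (jointLaw μ α β))⟩

theorem isBlockMatrix_iff_hasCommonBit {m n : ℕ} {M : Matrix (Fin m) (Fin n) ℝ}
    {α : Ω → Fin m} {β : Ω → Fin n} (hμ : ∀ ω, 0 ≤ μ ω) (hM : IsJointMatrixOf M μ α β) :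
    IsBlockMatrix M ↔ HasCommonBit μ α β := by
  have ne_zero_iff (i : Fin m) (j : Fin n) : M i j ≠ 0 ↔ ∃ ω, 0 < μ ω ∧ α ω = i ∧ β ω = j := by
    rw [hM, ← (pr_nonneg hμ _).lt_iff_ne', pr_pos_iff hμ]
    simp only [and_comm]
  constructor
  · rintro ⟨I, J, -, -, -, -, ⟨i, hi, j, -, hij⟩, ⟨i', hi', j', -, hij'⟩, off_block⟩
    obtain ⟨ω, hω, rfl, -⟩ := (ne_zero_iff i j).1 hij
    obtain ⟨ω', hω', rfl, -⟩ := (ne_zero_iff i' j').1 hij'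
    refine ⟨I, J, fun ω hω => ?_, ⟨ω, hω, hi⟩, ω', hω', Finset.mem_compl.1 hi'⟩
    have entry_ne_zero := (ne_zero_iff (α ω) (β ω)).2 ⟨ω, hω, rfl, rfl⟩
    by_contra hmem
    refine entry_ne_zero (off_block _ _ ?_)
    simp only [Finset.mem_compl, Finset.mem_coe] at hmem ⊢
    tauto
  · rintro ⟨P, Q, hPQ, ⟨ω, hω, hP⟩, ω', hω', hP'⟩
    have hQ := (hPQ ω hω).1 hP
    have hQ' := mt (hPQ ω' hω').2 hP'
    refine ⟨P.toFinset, Q.toFinset, ⟨α ω, by simpa⟩, ⟨α ω', by simpa⟩, ⟨β ω, by simpa⟩,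
      ⟨β ω', by simpa⟩, ⟨α ω, by simpa, β ω, by simpa, (ne_zero_iff _ _).2 ⟨ω, hω, rfl, rfl⟩⟩,
      ⟨α ω', by simpa, β ω', by simpa, (ne_zero_iff _ _).2 ⟨ω', hω', rfl, rfl⟩⟩, fun i j hij => ?_⟩
    by_contra entry_ne_zero
    obtain ⟨ω, hω, rfl, rfl⟩ := (ne_zero_iff i j).1 entry_ne_zero
    simp only [Finset.mem_compl, Set.mem_toFinset] at hij
    have := hPQ ω hω
    tauto

end Connectivity

/-- A pair of random variables `α, β` on a finite probability space is
conditionally independent (of some finite order) iff their joint probability matrix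
is not a block matrix. -/
theorem condIndep_iff_not_isBlockMatrix {Ω : Type} [Fintype Ω] {m n : ℕ}
    (μ : Ω → ℝ) (hμ : IsProb μ) (α : Ω → Fin m) (β : Ω → Fin n)
    (M : Matrix (Fin m) (Fin n) ℝ) (hM : IsJointMatrixOf M μ α β) :
    (∃ k, CondIndepOrder μ α β k) ↔ ¬ IsBlockMatrix M := by
  rw [condIndep_iff_not_hasCommonBit hμ, isBlockMatrix_iff_hasCommonBit hμ.1 hM]
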